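/- There exist absolute constants c > 0 and C > 0 such that the following holds. Let ν, α ∈ (0,1], let N, K, q be positive integers with ν·α·N/(K·q²) ≥ C. Let A ⊆ [N] be a set with no non-zero square differences and density α = |A|/N, and suppose that Σ over a with a/q ∈ Q_{=q} of ∫_{𝔐(a/q; N, K)} |1̂_A(γ) − α·1̂_{[N]}(γ)|² dγ ≥ ν·α·|A|. Then there exists an integer N' ≥ c·ν·α·N/(K·q²) and a set A' ⊆ [N'] with no non-zero square differences whose density α' = |A'|/N' satisfies α' ≥ (1 + ν/20)·α. -/

import Mathlib

open MeasureTheory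

/-- `A` has no non-zero square differences. -/
def NoSquareDiff (A : Finset ℕ) : Prop :=
  ∀ a ∈ A, ∀ b ∈ A, ∀ n : ℕ, 0 < n → a ≠ b + n ^ 2

/-- `e(x) = e^{2πix}`. -/
noncomputable def eu (x : ℝ) : ℂ := Complex.exp (2 * Real.pi * Complex.I * x)

/-- The Fourier transform of the indicator of `A`: `1̂_A(γ) = ∑_{a ∈ A} e(aγ)`. -/
noncomputable def hatInd (A : Finset ℕ) (γ : ℝ) : ℂ := ∑ a ∈ A, eu (a * γ)

/-- The major arc `𝔐(a/q; N, K) = {γ ∈ (0,1] : ‖γ - a/q‖ ≤ K/(qN)}`, where `‖·‖` is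
the distance to the nearest integer. -/
def majorArc (a q N : ℕ) (K : ℝ) : Set ℝ :=
  {γ ∈ Set.Ioc (0 : ℝ) 1 | |γ - (a : ℝ) / q - round (γ - (a : ℝ) / q)| ≤ K / (q * N)}

/-- The number of `j ∈ [1, L]` such that `x - d * j ∈ S`. -/
def progCount (S : Finset ℕ) (d L x : ℕ) : ℕ :=
  ((Finset.Icc 1 L).filter (fun j => ∃ y ∈ S, y + d * j = x)).card

lemma sum_progCount_mul {R : Type*} [CommSemiring R] {S : Finset ℕ} {N : ℕ}
    (hS : S ⊆ Finset.Icc 1 N) (d L : ℕ) (φ : ℕ → R) :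
    ∑ x ∈ Finset.Icc 1 (N + d * L), (progCount S d L x : R) * φ x =
      ∑ j ∈ Finset.Icc 1 L, ∑ y ∈ S, φ (y + d * j) := by
  have key : ∀ x, (progCount S d L x : R) * φ x =
      ∑ j ∈ Finset.Icc 1 L, ∑ y ∈ S, if y + d * j = x then φ x else 0 := by
    intro x
    rw [progCount, Finset.card_filter, Nat.cast_sum, Finset.sum_mul]
    refine Finset.sum_congr rfl fun j _ => ?_
    by_cases h : ∃ y ∈ S, y + d * j = x
    · obtain ⟨y, hy, hyx⟩ := h
      rw [if_pos ⟨y, hy, hyx⟩, Finset.sum_eq_single_of_mem y hy, if_pos hyx]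
      · simp
      · intro z _ hz
        rw [if_neg]
        omega
    · rw [if_neg h, Finset.sum_eq_zero]
      · simp
      · intro y hy
        exact if_neg fun hyx => h ⟨y, hy, hyx⟩
  rw [Finset.sum_congr rfl fun x _ => key x, Finset.sum_comm]
  refine Finset.sum_congr rfl fun j hj => ?_
  rw [Finset.sum_comm]
  refine Finset.sum_congr rfl fun y hy => ?_
  have h1 := Finset.mem_Icc.1 (hS hy)
  have h2 := Finset.mem_Icc.1 hj
  have h3 : d * j ≤ d * L := Nat.mul_le_mul_left d h2.2
  rw [Finset.sum_ite_eq, if_pos]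
  rw [Finset.mem_Icc]
  omega

lemma sum_progCount {S : Finset ℕ} {N : ℕ} (hS : S ⊆ Finset.Icc 1 N) (d L : ℕ) :
    ∑ x ∈ Finset.Icc 1 (N + d * L), (progCount S d L x : ℝ) = S.card * L := by
  have h := sum_progCount_mul (R := ℝ) hS d L (fun _ => 1)
  simp only [mul_one] at h
  rw [h]
  simp [mul_comm]

lemma progCount_le (S : Finset ℕ) (d L x : ℕ) : progCount S d L x ≤ L := by
  simpa [progCount] using Finset.card_filter_le (Finset.Icc 1 L) (fun j => ∃ y ∈ S, y + d * j = x)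

lemma progCount_Icc_eq {N d L x : ℕ} (h1 : d * L < x) (h2 : x ≤ N) :
    progCount (Finset.Icc 1 N) d L x = L := by
  rw [progCount, Finset.filter_true_of_mem]
  · simp
  · intro j hj
    have h3 : d * j ≤ d * L := Nat.mul_le_mul_left d (Finset.mem_Icc.1 hj).2
    exact ⟨x - d * j, Finset.mem_Icc.2 (by omega), by omega⟩

lemma NoSquareDiff.preimage {A : Finset ℕ} (hA : NoSquareDiff A) {q : ℕ} (hq : 0 < q)
    (L x : ℕ) :
    NoSquareDiff ((Finset.Icc 1 L).filter (fun j => ∃ y ∈ A, y + q ^ 2 * j = x)) := by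
  intro i hi j hj n hn hij
  obtain ⟨y, hy, hyx⟩ := (Finset.mem_filter.1 hi).2
  obtain ⟨z, hz, hzx⟩ := (Finset.mem_filter.1 hj).2
  refine hA z hz y hy (q * n) (Nat.mul_pos hq hn) ?_
  subst hij
  have : z + q ^ 2 * j = y + (q * n) ^ 2 + q ^ 2 * j := by rw [hzx, ← hyx]; ring
  omega

lemma eu_add (x y : ℝ) : eu (x + y) = eu x * eu y := by
  simp only [eu, ← Complex.exp_add]
  push_cast
  ring_nf

lemma eu_int (m : ℤ) : eu m = 1 := by
  rw [eu, Complex.exp_eq_one_iff]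
  exact ⟨m, by push_cast; ring⟩

lemma conj_eu (x : ℝ) : (starRingEnd ℂ) (eu x) = eu (-x) := by
  rw [eu, eu, ← Complex.exp_conj]
  simp [Complex.conj_ofNat]

lemma continuous_eu : Continuous eu := by
  unfold eu
  fun_prop

lemma continuous_hatInd (A : Finset ℕ) : Continuous (hatInd A) := by
  unfold hatInd
  have := continuous_eu
  fun_prop

lemma norm_eu_sub_one_le (x : ℝ) : ‖eu x - 1‖ ≤ 2 * Real.pi * |x| := by
  have h := Real.norm_exp_I_mul_ofReal_sub_one_le (x := 2 * Real.pi * x)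
  have e : eu x = Complex.exp (Complex.I * ((2 * Real.pi * x : ℝ) : ℂ)) := by
    rw [eu]; push_cast; ring_nf
  rw [e]
  refine h.trans_eq ?_
  rw [Real.norm_eq_abs, abs_mul, abs_of_pos Real.two_pi_pos]

lemma integral_eu_int_mul (m : ℤ) :
    ∫ γ in (0 : ℝ)..1, eu (m * γ) = if m = 0 then 1 else 0 := by
  split_ifs with h
  · subst h
    simp [eu]
  · have hc : (2 * Real.pi * Complex.I * m : ℂ) ≠ 0 := by
      simp [h, Real.pi_ne_zero]
    have e : ∀ γ : ℝ, eu (m * γ) = Complex.exp ((2 * Real.pi * Complex.I * m : ℂ) * γ) := by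
      intro γ; rw [eu]; push_cast; ring_nf
    simp_rw [e]
    rw [integral_exp_mul_complex hc]
    have h1 := eu_int m
    rw [eu] at h1
    push_cast at h1
    simp [h1]

/-- Parseval's identity for trigonometric polynomials with real coefficients. -/
lemma integral_norm_sq_trigPoly (s : Finset ℕ) (u : ℕ → ℝ) :
    ∫ γ in (0 : ℝ)..1, ‖∑ x ∈ s, (u x : ℂ) * eu (x * γ)‖ ^ 2 = ∑ x ∈ s, u x ^ 2 := by
  have hpt : ∀ γ : ℝ, ((‖∑ x ∈ s, (u x : ℂ) * eu (x * γ)‖ ^ 2 : ℝ) : ℂ) =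
      ∑ x ∈ s, ∑ y ∈ s, ((u x : ℂ) * u y) * eu (((x : ℤ) - (y : ℤ) : ℤ) * γ) := by
    intro γ
    rw [Complex.ofReal_pow, ← Complex.mul_conj', map_sum, Finset.sum_mul_sum]
    refine Finset.sum_congr rfl fun x _ => Finset.sum_congr rfl fun y _ => ?_
    rw [map_mul, conj_eu, Complex.conj_ofReal]
    have : ((((x : ℤ) - (y : ℤ) : ℤ) : ℝ) * γ) = x * γ + -(y * γ) := by push_cast; ring
    rw [this, eu_add]
    ring
  have hcont := continuous_eu
  apply Complex.ofReal_injective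
  rw [← intervalIntegral.integral_ofReal]
  simp_rw [hpt]
  rw [intervalIntegral.integral_finsetSum]
  · rw [Complex.ofReal_sum]
    refine Finset.sum_congr rfl fun x hx => ?_
    rw [intervalIntegral.integral_finsetSum]
    · simp_rw [intervalIntegral.integral_const_mul, integral_eu_int_mul, sub_eq_zero,
        Nat.cast_inj, mul_ite, mul_one, mul_zero]
      rw [Finset.sum_ite_eq, if_pos hx]
      push_cast
      ring
    · intro y _
      exact Continuous.intervalIntegrable (by fun_prop) _ _
  · intro x _
    exact Continuous.intervalIntegrable (by fun_prop) _ _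

lemma measurableSet_majorArc (a q N : ℕ) (K : ℝ) : MeasurableSet (majorArc a q N K) := by
  have hr : Measurable fun γ : ℝ => ((round (γ - (a : ℝ) / q) : ℤ) : ℝ) := by
    simp_rw [round_eq]
    exact measurable_from_top.comp (Int.measurable_floor.comp (by fun_prop))
  exact measurableSet_Ioc.inter
    (measurableSet_Iic.preimage (((measurable_id.sub_const ((a : ℝ) / q)).sub hr).abs))

lemma disjoint_majorArc {a b q N : ℕ} {K : ℝ} (ha : a ∈ Finset.Icc 1 q)
    (hb : b ∈ Finset.Icc 1 q) (hab : a ≠ b) (hN : 0 < N) (hK : 2 * K < N) :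
    Disjoint (majorArc a q N K) (majorArc b q N K) := by
  rw [Finset.mem_Icc] at ha hb
  rw [Set.disjoint_left]
  rintro γ ⟨_, h1⟩ ⟨_, h2⟩
  apply hab
  have hq : (0 : ℝ) < q := by exact_mod_cast (by omega : 0 < q)
  have hN' : (0 : ℝ) < N := by exact_mod_cast hN
  set m := round (γ - (a : ℝ) / q)
  set n := round (γ - (b : ℝ) / q)
  have hlt : q * (2 * (K / (q * N))) < 1 := by
    have : q * (2 * (K / (q * N))) = 2 * K / N := by field_simp
    rw [this, div_lt_one hN']
    exact hK
  have h3 : |((b : ℤ) - (a : ℤ) + q * (n - m) : ℤ)| < 1 := by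
    rw [← Int.cast_lt (R := ℝ), Int.cast_abs]
    push_cast
    have e : (b : ℝ) - a + q * (n - m) =
        q * ((γ - a / q - m) - (γ - b / q - n)) := by field_simp; ring
    rw [e, abs_mul, abs_of_pos hq]
    refine lt_of_le_of_lt (mul_le_mul_of_nonneg_left ?_ hq.le) hlt
    have := abs_sub (γ - a / q - m) (γ - b / q - n)
    linarith
  rw [Int.abs_lt_one_iff] at h3
  have h4 : (q : ℤ) ∣ (a : ℤ) - b := ⟨n - m, by linarith⟩
  have h5 : (a : ℤ) - b = 0 := by
    apply Int.eq_zero_of_abs_lt_dvd h4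
    rw [abs_lt]
    constructor <;> omega
  omega

/-- On the major arcs at denominator `q`, the exponential sum over the progression
`{q² j : 1 ≤ j ≤ L}` is close to its maximal value. -/
lemma norm_sum_eu_sub_le {a q N L : ℕ} {K γ : ℝ} (hq : 0 < q) (hN : 0 < N)
    (hγ : γ ∈ majorArc a q N K) :
    ‖∑ j ∈ Finset.Icc 1 L, eu ((q ^ 2 * j : ℕ) * γ) - L‖ ≤
      L * (2 * Real.pi * (q * L * K / N)) := by
  have hq' : (0 : ℝ) < q := by exact_mod_cast hq
  have hN' : (0 : ℝ) < N := by exact_mod_cast hN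
  have h := hγ.2
  set m := round (γ - (a : ℝ) / q)
  set θ := γ - (a : ℝ) / q - m with hθ
  have e : ∑ j ∈ Finset.Icc 1 L, eu ((q ^ 2 * j : ℕ) * γ) - L =
      ∑ j ∈ Finset.Icc 1 L, (eu ((q ^ 2 * j : ℕ) * γ) - 1) := by
    simp
  rw [e]
  have hb : ∀ j ∈ Finset.Icc 1 L, ‖eu ((q ^ 2 * j : ℕ) * γ) - 1‖ ≤
      2 * Real.pi * (q * L * K / N) := by
    intro j hj
    have hj' : (j : ℝ) ≤ L := by exact_mod_cast (Finset.mem_Icc.1 hj).2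
    have hγθ : ((q ^ 2 * j : ℕ) : ℝ) * γ =
        ((q * j * a + q ^ 2 * j * m : ℤ) : ℝ) + q ^ 2 * j * θ := by
      rw [hθ]; push_cast; field_simp; ring
    rw [hγθ, eu_add, eu_int, one_mul]
    refine (norm_eu_sub_one_le _).trans (mul_le_mul_of_nonneg_left ?_ Real.two_pi_pos.le)
    rw [abs_mul, abs_of_nonneg (by positivity)]
    calc (q : ℝ) ^ 2 * j * |θ| ≤ q ^ 2 * L * (K / (q * N)) := by gcongr
      _ = q * L * K / N := by field_simp
  refine (norm_sum_le_of_le _ hb).trans_eq ?_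
  simp

/-- If no translate of the progression has many points of `A`, the balanced function of `A`
has small second moment along the progression. -/
lemma sum_sq_progCount_sub_le {A : Finset ℕ} {N d L : ℕ} {α δ : ℝ}
    (hA : A ⊆ Finset.Icc 1 N) (hα : 0 < α) (hcard : (A.card : ℝ) = α * N) (hδ : δ ≤ 1)
    (hbound : ∀ x, (progCount A d L x : ℝ) ≤ (1 + δ) * α * L) :
    ∑ x ∈ Finset.Icc 1 (N + d * L),
        ((progCount A d L x : ℝ) - α * progCount (Finset.Icc 1 N) d L x) ^ 2 ≤
      δ * α ^ 2 * N * L ^ 2 + 8 * α ^ 2 * d * L ^ 3 := by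
  set P := Finset.Icc 1 (N + d * L)
  set B := Finset.Icc 1 (d * L) ∪ Finset.Icc (N + 1) (N + d * L)
  have hBcard : ((B.card : ℕ) : ℝ) ≤ 2 * (d * L) := by
    have : B.card ≤ 2 * (d * L) := by
      refine (Finset.card_union_le _ _).trans ?_
      simp
      omega
    exact_mod_cast this
  have hpt : ∀ x ∈ P,
      ((progCount A d L x : ℝ) - α * progCount (Finset.Icc 1 N) d L x) ^ 2 ≤
        (δ - 1) * α * L * progCount A d L x + α ^ 2 * L * progCount (Finset.Icc 1 N) d L x +
          (if x ∈ B then 4 * α ^ 2 * (L : ℝ) ^ 2 else 0) := by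
    intro x hx
    have ha := hbound x
    have ha0 : (0 : ℝ) ≤ progCount A d L x := Nat.cast_nonneg _
    have hb0 : (0 : ℝ) ≤ progCount (Finset.Icc 1 N) d L x := Nat.cast_nonneg _
    have hbL : (progCount (Finset.Icc 1 N) d L x : ℝ) ≤ L := by
      exact_mod_cast progCount_le _ _ _ _
    have hedge : 2 * α * (progCount A d L x * ((L : ℝ) - progCount (Finset.Icc 1 N) d L x)) ≤
        (if x ∈ B then 4 * α ^ 2 * (L : ℝ) ^ 2 else 0) := by
      split_ifs with hxB
      · have h2 : (progCount A d L x : ℝ) ≤ 2 * α * L := by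
          refine ha.trans ?_
          gcongr
          linarith
        calc _ ≤ 2 * α * ((2 * α * L) * L) := by
              gcongr
              linarith
          _ = _ := by ring
      · have : progCount (Finset.Icc 1 N) d L x = L := by
          simp only [B, P, Finset.mem_union, Finset.mem_Icc] at hxB hx
          exact progCount_Icc_eq (by omega) (by omega)
        rw [this]
        simp
    generalize (progCount A d L x : ℝ) = u at *
    generalize (progCount (Finset.Icc 1 N) d L x : ℝ) = v at *
    have h1 : u * u ≤ (1 + δ) * α * L * u := mul_le_mul_of_nonneg_right ha ha0
    have h2 : α ^ 2 * (v * v) ≤ α ^ 2 * (L * v) := by gcongr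
    nlinarith
  refine (Finset.sum_le_sum hpt).trans ?_
  rw [Finset.sum_add_distrib, Finset.sum_add_distrib, ← Finset.mul_sum, ← Finset.mul_sum,
    sum_progCount hA, sum_progCount (Finset.Subset.refl _), hcard]
  have hB : ∑ x ∈ P, (if x ∈ B then 4 * α ^ 2 * (L : ℝ) ^ 2 else 0) ≤
      2 * (d * L) * (4 * α ^ 2 * (L : ℝ) ^ 2) := by
    rw [← Finset.sum_filter, Finset.sum_const, nsmul_eq_mul]
    gcongr
    refine le_trans ?_ hBcard
    exact_mod_cast Finset.card_le_card fun x hx => (Finset.mem_filter.1 hx).2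
  rw [Nat.card_Icc, Nat.add_sub_cancel]
  linarith

lemma hatInd_mul_eq_sum {A : Finset ℕ} {N d L : ℕ} (α : ℝ) (hA : A ⊆ Finset.Icc 1 N)
    (γ : ℝ) :
    (hatInd A γ - (α : ℂ) * hatInd (Finset.Icc 1 N) γ) *
        ∑ j ∈ Finset.Icc 1 L, eu ((d * j : ℕ) * γ) =
      ∑ x ∈ Finset.Icc 1 (N + d * L),
        (((progCount A d L x : ℝ) - α * progCount (Finset.Icc 1 N) d L x : ℝ) : ℂ) *
          eu (x * γ) := by
  have key : ∀ S : Finset ℕ, S ⊆ Finset.Icc 1 N →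
      hatInd S γ * ∑ j ∈ Finset.Icc 1 L, eu ((d * j : ℕ) * γ) =
        ∑ x ∈ Finset.Icc 1 (N + d * L), (progCount S d L x : ℂ) * eu (x * γ) := by
    intro S hS
    rw [sum_progCount_mul hS, hatInd, Finset.sum_mul_sum, Finset.sum_comm]
    refine Finset.sum_congr rfl fun j _ => Finset.sum_congr rfl fun y _ => ?_
    rw [← eu_add, Nat.cast_add, add_mul]
  rw [sub_mul, mul_assoc, key A hA, key _ (Finset.Subset.refl _), Finset.mul_sum,
    ← Finset.sum_sub_distrib]
  refine Finset.sum_congr rfl fun x _ => ?_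
  push_cast
  ring

/-- Energy on the major arcs at denominator `q` is captured by progressions of difference
`q²`. -/
lemma sum_integral_majorArc_le {A : Finset ℕ} {N q L : ℕ} {K : ℝ} (α : ℝ)
    (hA : A ⊆ Finset.Icc 1 N) (hq : 0 < q) (hN : 0 < N) (hK : 2 * K < N)
    (hL : q * L * K / N ≤ 1 / 100) :
    (L : ℝ) ^ 2 / 2 * ∑ a ∈ (Finset.Icc 1 q).filter (fun a => Nat.gcd a q = 1),
          ∫ γ in majorArc a q N K,
            ‖hatInd A γ - (α : ℂ) * hatInd (Finset.Icc 1 N) γ‖ ^ 2 ≤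
      ∑ x ∈ Finset.Icc 1 (N + q ^ 2 * L),
        ((progCount A (q ^ 2) L x : ℝ) - α * progCount (Finset.Icc 1 N) (q ^ 2) L x) ^ 2 := by
  set F : ℝ → ℂ := fun γ => hatInd A γ - (α : ℂ) * hatInd (Finset.Icc 1 N) γ with hF
  set G : ℝ → ℂ := fun γ => ∑ j ∈ Finset.Icc 1 L, eu ((q ^ 2 * j : ℕ) * γ) with hG
  set T := (Finset.Icc 1 q).filter (fun a => Nat.gcd a q = 1)
  have hFc : Continuous F := by
    have := continuous_hatInd
    fun_prop
  have hGc : Continuous G := by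
    have := continuous_eu
    fun_prop
  have hint : ∀ f : ℝ → ℝ, Continuous f → IntegrableOn f (Set.Ioc 0 1) := fun f hf =>
    (hf.integrableOn_Icc).mono_set Set.Ioc_subset_Icc_self
  have hsub : ∀ a, majorArc a q N K ⊆ Set.Ioc 0 1 := fun a γ hγ => hγ.1
  have hcF : Continuous fun γ => (L : ℝ) ^ 2 / 2 * ‖F γ‖ ^ 2 := by fun_prop
  have hcFG : Continuous fun γ => ‖F γ * G γ‖ ^ 2 := by fun_prop
  have hGlow : ∀ a, ∀ γ ∈ majorArc a q N K, (L : ℝ) ^ 2 / 2 ≤ ‖G γ‖ ^ 2 := by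
    intro a γ hγ
    have h1 := norm_sum_eu_sub_le (L := L) hq hN hγ
    have h2 : (L : ℝ) - ‖G γ‖ ≤ ‖G γ - L‖ := by
      have := norm_sub_norm_le (L : ℂ) (G γ)
      rwa [norm_sub_rev, Complex.norm_natCast] at this
    have h3 : 2 * Real.pi * (q * L * K / N) ≤ 1 / 10 := by
      have := Real.pi_lt_four
      have := Real.pi_pos
      nlinarith
    have h4 : (L : ℝ) * (2 * Real.pi * (q * L * K / N)) ≤ L * (1 / 10) := by gcongr
    have h5 : (9 / 10 : ℝ) * L ≤ ‖G γ‖ := by linarith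
    have h6 : (9 / 10 * (L : ℝ)) ^ 2 ≤ ‖G γ‖ ^ 2 := by gcongr
    nlinarith [sq_nonneg (L : ℝ)]
  calc (L : ℝ) ^ 2 / 2 * ∑ a ∈ T, ∫ γ in majorArc a q N K, ‖F γ‖ ^ 2
      = ∑ a ∈ T, ∫ γ in majorArc a q N K, (L : ℝ) ^ 2 / 2 * ‖F γ‖ ^ 2 := by
        rw [Finset.mul_sum]
        simp_rw [integral_const_mul]
    _ ≤ ∑ a ∈ T, ∫ γ in majorArc a q N K, ‖F γ * G γ‖ ^ 2 := by
        refine Finset.sum_le_sum fun a _ => setIntegral_mono_on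
          ((hint _ hcF).mono_set (hsub a)) ((hint _ hcFG).mono_set (hsub a))
          (measurableSet_majorArc a q N K) fun γ hγ => ?_
        rw [norm_mul, mul_pow, mul_comm]
        exact mul_le_mul_of_nonneg_left (hGlow a γ hγ) (sq_nonneg _)
    _ = ∫ γ in ⋃ a ∈ T, majorArc a q N K, ‖F γ * G γ‖ ^ 2 := by
        rw [integral_biUnion_finset]
        · exact fun a _ => measurableSet_majorArc a q N K
        · intro a ha b hb hab
          exact disjoint_majorArc (Finset.mem_filter.1 ha).1 (Finset.mem_filter.1 hb).1
            hab hN hK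
        · exact fun a _ => (hint _ hcFG).mono_set (hsub a)
    _ ≤ ∫ γ in Set.Ioc (0 : ℝ) 1, ‖F γ * G γ‖ ^ 2 := by
        refine setIntegral_mono_set (hint _ hcFG) ?_ ?_
        · exact Filter.Eventually.of_forall fun γ => sq_nonneg _
        · exact (Set.iUnion₂_subset fun a _ => hsub a).eventuallyLE
    _ = _ := by
        rw [← intervalIntegral.integral_of_le zero_le_one, ← integral_norm_sq_trigPoly]
        simp_rw [hF, hG, hatInd_mul_eq_sum α hA]

theorem statement_6 :
    ∃ c > (0 : ℝ), ∃ C > (0 : ℝ), ∀ ν α : ℝ, 0 < ν → ν ≤ 1 → 0 < α → α ≤ 1 →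
      ∀ N K q : ℕ, 0 < N → 0 < K → 0 < q → C ≤ ν * α * N / (K * q ^ 2) →
      ∀ A : Finset ℕ, A ⊆ Finset.Icc 1 N → NoSquareDiff A → α = (A.card : ℝ) / N →
      ν * α * A.card ≤
        ∑ a ∈ (Finset.Icc 1 q).filter (fun a => Nat.gcd a q = 1),
          ∫ γ in majorArc a q N K,
            ‖hatInd A γ - (α : ℂ) * hatInd (Finset.Icc 1 N) γ‖ ^ 2 →
      ∃ N' : ℕ, c * ν * α * N / (K * q ^ 2) ≤ N' ∧
        ∃ A' : Finset ℕ, A' ⊆ Finset.Icc 1 N' ∧ NoSquareDiff A' ∧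
          (1 + ν / 20) * α ≤ (A'.card : ℝ) / N' := by
  refine ⟨1 / 1000, by norm_num, 1000, by norm_num, ?_⟩
  intro ν α hν hν1 hα hα1 N K q hN hK hq hC A hA hsq hdens henergy
  have hN' : (0 : ℝ) < N := by exact_mod_cast hN
  have hK' : (1 : ℝ) ≤ K := by exact_mod_cast hK
  have hq' : (1 : ℝ) ≤ q := by exact_mod_cast hq
  set X : ℝ := ν * α * N / (K * q ^ 2) with hX
  have hX' : 1 / 1000 * ν * α * N / (K * q ^ 2) = X / 1000 := by rw [hX]; ring
  obtain ⟨L, hL⟩ : ∃ L : ℕ, L = ⌈X / 1000⌉₊ := ⟨_, rfl⟩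
  have hXL : X / 1000 ≤ L := hL ▸ Nat.le_ceil _
  have hLX : (L : ℝ) ≤ X / 500 := by
    have := Nat.ceil_lt_add_one (a := X / 1000) (by linarith)
    rw [← hL] at this
    linarith
  have hL0 : (0 : ℝ) < L := by linarith
  have hXmul : X * (K * q ^ 2) = ν * α * N := by rw [hX]; field_simp
  have hνα : ν * α ≤ ν := mul_le_of_le_one_right hν.le hα1
  have hναN : ν * α * N ≤ ν * N := by gcongr
  have hLKq : (L : ℝ) * (K * q ^ 2) ≤ ν * N / 500 := by
    have : (L : ℝ) * (K * q ^ 2) ≤ X / 500 * (K * q ^ 2) := by gcongr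
    linarith
  have hνN : ν * N ≤ N := mul_le_of_le_one_left hN'.le hν1
  have hqq : (1 : ℝ) ≤ q ^ 2 := one_le_pow₀ hq'
  have h2K : 2 * (K : ℝ) < N := by
    have h1 : (K : ℝ) ≤ K * q ^ 2 := le_mul_of_one_le_right (by linarith) hqq
    have h2 : 1000 * ((K : ℝ) * q ^ 2) ≤ X * (K * q ^ 2) := by gcongr
    linarith
  have hphase : q * L * K / N ≤ (1 / 100 : ℝ) := by
    rw [div_le_iff₀ hN']
    have h1 : (q : ℝ) ≤ q ^ 2 := le_self_pow₀ hq' two_ne_zero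
    have h2 : q * L * (K : ℝ) ≤ q ^ 2 * L * K := by gcongr
    linarith
  have hqL : 500 * ((q : ℝ) ^ 2 * L) ≤ ν * N := by
    have h1 : (q : ℝ) ^ 2 * L ≤ K * (q ^ 2 * L) :=
      le_mul_of_one_le_left (by positivity) hK'
    linarith
  have hcard : (A.card : ℝ) = α * N := by rw [hdens]; field_simp
  by_contra hcon
  have hbound : ∀ x, (progCount A (q ^ 2) L x : ℝ) ≤ (1 + ν / 20) * α * L := by
    intro x
    by_contra! hx
    refine hcon ⟨L, by rw [hX']; exact hXL, _, Finset.filter_subset _ _,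
      hsq.preimage hq L x, ?_⟩
    rw [le_div_iff₀ hL0]
    exact hx.le
  have hup := sum_sq_progCount_sub_le hA hα hcard (by linarith) hbound
  have hlow := sum_integral_majorArc_le α hA hq hN h2K hphase
  have hmul := mul_le_mul_of_nonneg_left henergy (by positivity : (0 : ℝ) ≤ (L : ℝ) ^ 2 / 2)
  rw [hcard] at hmul
  push_cast at hup
  have hfin : α ^ 2 * L ^ 2 * (500 * ((q : ℝ) ^ 2 * L)) ≤ α ^ 2 * L ^ 2 * (ν * N) := by gcongr
  have hpos : 0 < α ^ 2 * L ^ 2 * (ν * N) := by positivity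
  linarith
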